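/- Let C be a strong divisibility sequence, let p be an ideal prime for C, and write α = α(p). Let n = α·n' + r, m_1 = α·m_1' + r_1, m_2 = α·m_2' + r_2 with n', m_1', m_2' ≥ 0, 0 ≤ r, r_1, r_2 < α, m_1 + m_2 = n, and suppose r_1 + r_2 = r. Then ν_p(binom(n, m_1)_C) = ν_p(binom(n', m_1')), where binom(n', m_1') is the ordinary binomial coefficient. -/

import Mathlib

open Finset

/-- A strong divisibility sequence: nonzero integers `Cs 1, Cs 2, ...` with
`gcd (Cs n) (Cs m) = |Cs (gcd n m)|`. -/
def IsStrongDivSeq (Cs : ℕ → ℤ) : Prop :=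
  (∀ n, 1 ≤ n → Cs n ≠ 0) ∧
  ∀ m n, 1 ≤ m → 1 ≤ n → Int.gcd (Cs n) (Cs m) = (Cs (Nat.gcd n m)).natAbs

/-- `a` is the rank of apparition of `m` in the sequence `Cs`:
the least index `j ≥ 1` such that `m ∣ Cs j`. -/
def IsRank (Cs : ℕ → ℤ) (m a : ℕ) : Prop :=
  1 ≤ a ∧ (m : ℤ) ∣ Cs a ∧ ∀ j, 1 ≤ j → (m : ℤ) ∣ Cs j → a ≤ j

/-- The `C`-orial: `0!_C = 1`, `n!_C = Cs 1 * Cs 2 * ⋯ * Cs n`. -/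
def Corial (Cs : ℕ → ℤ) : ℕ → ℤ
  | 0 => 1
  | n + 1 => Corial Cs n * Cs (n + 1)

/-- `p` is an ideal prime for `Cs`, with `α k` the rank of apparition of `p ^ k`
and parameter `s = s(p)`. -/
def IdealPrime (Cs : ℕ → ℤ) (p : ℕ) (α : ℕ → ℕ) (s : ℕ) : Prop :=
  1 ≤ s ∧ (∀ k, 1 ≤ k → IsRank Cs (p ^ k) (α k)) ∧
  (∀ k, 1 ≤ k → k ≤ s → α k = α 1) ∧
  (∀ k, s < k → α k = p ^ (k - s) * α 1)

/-- The `p`-adic valuation of the `C`-nomial coefficient `binom(n, m)_C`,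
defined as `ν_p(n!_C) - ν_p(m!_C) - ν_p((n-m)!_C)` (an integer). -/
def nuCnomial (p : ℕ) (Cs : ℕ → ℤ) (n m : ℕ) : ℤ :=
  (padicValInt p (Corial Cs n) : ℤ) - (padicValInt p (Corial Cs m) : ℤ)
    - (padicValInt p (Corial Cs (n - m)) : ℤ)


lemma dvd_iff_rank (Cs : ℕ → ℤ) (q a : ℕ) (hC : IsStrongDivSeq Cs) (h : IsRank Cs q a)
    (j : ℕ) (hj : 1 ≤ j) : q ∣ (Cs j).natAbs ↔ a ∣ j := by
  obtain ⟨ha, hd, hmin⟩ := h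
  have hg := hC.2 a j ha hj
  constructor
  · intro hq
    have h1 : q ∣ Int.gcd (Cs j) (Cs a) :=
      Nat.dvd_gcd hq (Int.natCast_dvd.mp hd)
    rw [hg] at h1
    have hpos : 1 ≤ Nat.gcd j a := Nat.gcd_pos_of_pos_left _ hj
    have h2 := hmin _ hpos (Int.natCast_dvd.mpr h1)
    have h3 : Nat.gcd j a = a := le_antisymm (Nat.gcd_le_right _ ha) h2
    exact Nat.gcd_eq_right_iff_dvd.mp h3
  · intro hq
    rw [Nat.gcd_eq_right hq] at hg
    have h1 : q ∣ (Cs a).natAbs := Int.natCast_dvd.mp hd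
    rw [← hg] at h1
    exact h1.trans (Nat.gcd_dvd_left _ _)

lemma val_term (Cs : ℕ → ℤ) (p : ℕ) (hp : p.Prime) (α : ℕ → ℕ) (s : ℕ)
    (hC : IsStrongDivSeq Cs) (hid : IdealPrime Cs p α s) (t : ℕ) (ht : 1 ≤ t) :
    padicValInt p (Cs (α 1 * t)) = s + padicValNat p t := by
  have := Fact.mk hp
  obtain ⟨hs, hr, hle, hgt⟩ := hid
  have ha : 1 ≤ α 1 := (hr 1 le_rfl).1
  have hj : 1 ≤ α 1 * t := Nat.mul_pos ha ht
  have hne : (Cs (α 1 * t)).natAbs ≠ 0 := Int.natAbs_ne_zero.mpr (hC.1 _ hj)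
  unfold padicValInt
  apply eq_of_forall_le_iff
  intro k
  rw [← padicValNat_dvd_iff_le hne]
  rcases Nat.eq_zero_or_pos k with rfl | hk
  · simp
  rw [dvd_iff_rank Cs _ _ hC (hr k hk) _ hj]
  by_cases hks : k ≤ s
  · rw [hle k hk hks]
    exact iff_of_true (dvd_mul_right _ _) (by omega)
  · rw [hgt k (by omega), mul_comm, Nat.mul_dvd_mul_iff_left ha,
      padicValNat_dvd_iff_le (by omega)]
    omega

lemma corial_ne (Cs : ℕ → ℤ) (hC : IsStrongDivSeq Cs) (n : ℕ) : Corial Cs n ≠ 0 := by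
  induction n with
  | zero => simp [Corial]
  | succ n ih => exact mul_ne_zero ih (hC.1 _ (by omega))

lemma val_corial (Cs : ℕ → ℤ) (p : ℕ) (hp : p.Prime) (α : ℕ → ℕ) (s : ℕ)
    (hC : IsStrongDivSeq Cs) (hid : IdealPrime Cs p α s) (n : ℕ) :
    padicValInt p (Corial Cs n) = s * (n / α 1) + padicValNat p (n / α 1).factorial := by
  have := Fact.mk hp
  induction n with
  | zero => simp [Corial]
  | succ n ih =>
    have ha : 1 ≤ α 1 := (hid.2.1 1 le_rfl).1
    rw [Corial, padicValInt.mul (corial_ne Cs hC n) (hC.1 _ (by omega)), ih, Nat.succ_div]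
    split_ifs with h
    · have e : n + 1 = α 1 * (n / α 1 + 1) := by
        have := Nat.mul_div_cancel' h
        rw [Nat.succ_div_of_dvd h] at this
        exact this.symm
      have hv := val_term Cs p hp α s hC hid (n / α 1 + 1) (Nat.succ_pos _)
      rw [← e] at hv
      rw [hv, Nat.factorial_succ, padicValNat.mul (Nat.succ_ne_zero _) (Nat.factorial_ne_zero _)]
      ring
    · have hz : padicValInt p (Cs (n + 1)) = 0 := by
        apply padicValNat.eq_zero_of_not_dvd
        have := dvd_iff_rank Cs _ _ hC (hid.2.1 1 le_rfl) (n + 1) (by omega)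
        rw [pow_one] at this
        rwa [this]
      rw [hz]; rfl

theorem stmt8 (Cs : ℕ → ℤ) (p : ℕ) (hp : p.Prime) (α : ℕ → ℕ) (s : ℕ)
    (hC : IsStrongDivSeq Cs) (hid : IdealPrime Cs p α s)
    (n n' r m1 m1' r1 m2 m2' r2 : ℕ)
    (hn : n = α 1 * n' + r) (hm1 : m1 = α 1 * m1' + r1) (hm2 : m2 = α 1 * m2' + r2)
    (hr : r < α 1) (hr1 : r1 < α 1) (hr2 : r2 < α 1) (hsum : m1 + m2 = n)
    (hr12 : r1 + r2 = r) :
    nuCnomial p Cs n m1 = (padicValNat p (Nat.choose n' m1') : ℤ) := by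
  have := Fact.mk hp
  have ha : 0 < α 1 := by omega
  have key : ∀ a b : ℕ, b < α 1 → (α 1 * a + b) / α 1 = a := by
    intro a b hb
    rw [Nat.mul_add_div ha, Nat.div_eq_of_lt hb, add_zero]
  have hn' : n' = m1' + m2' := by
    apply Nat.eq_of_mul_eq_mul_left ha
    rw [mul_add]
    omega
  have hm : n - m1 = m2 := by omega
  unfold nuCnomial
  rw [hm, val_corial Cs p hp α s hC hid, val_corial Cs p hp α s hC hid,
    val_corial Cs p hp α s hC hid, hn, hm1, hm2, key _ _ hr, key _ _ hr1, key _ _ hr2, hn']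
  have hf := Nat.add_choose_mul_factorial_mul_factorial m1' m2'
  rw [← Nat.choose_symm_add] at hf
  have hv := congrArg (padicValNat p) hf
  have hc : (m1' + m2').choose m1' ≠ 0 := (Nat.choose_pos (by omega)).ne'
  rw [padicValNat.mul (mul_ne_zero hc (Nat.factorial_ne_zero _)) (Nat.factorial_ne_zero _),
    padicValNat.mul hc (Nat.factorial_ne_zero _)] at hv
  rw [← hv]
  push_cast
  ring
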